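/- Over {a<b<c}, the word w = a b^{11} c b a b c b^5 is M-equivalent to b^i a b^{11−2i} c b a b^{1+2i} c b^{5−i} for every 0 ≤ i ≤ 5, and any two distinct words among these six have Hamming distance at least 7. -/

import Mathlib

open List

/-- Number of occurrences of `v` as a scattered subsequence of `w`. -/
def scount {α : Type*} [DecidableEq α] (w v : List α) : ℕ := w.sublists.count v

/-- The ternary ordered alphabet {a < b < c}. -/
inductive ABC | a | b | c
deriving DecidableEq

open ABC

/-- M-equivalence over the ordered alphabet {a < b < c}. -/
def MEq3 (w w' : List ABC) : Prop :=
  scount w [a] = scount w' [a] ∧ scount w [b] = scount w' [b] ∧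
  scount w [c] = scount w' [c] ∧ scount w [a, b] = scount w' [a, b] ∧
  scount w [b, c] = scount w' [b, c] ∧ scount w [a, b, c] = scount w' [a, b, c]

/-- Projection onto {a, c}: erase all b's. -/
def projAC (w : List ABC) : List ABC := w.filter (· ≠ b)

abbrev A (k : ℕ) : List ABC := List.replicate k a
abbrev B (k : ℕ) : List ABC := List.replicate k b
abbrev C (k : ℕ) : List ABC := List.replicate k c

/-- Hamming distance between two (equal-length) words. -/
def dH {α : Type*} [DecidableEq α] (w w' : List α) : ℕ :=
  (w.zip w').countP fun p => p.1 ≠ p.2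

/-- The family `b^i a b^{11-2i} c b a b^{1+2i} c b^{5-i}`. -/
def fam (i : ℕ) : List ABC :=
  B i ++ [a] ++ B (11 - 2 * i) ++ [c, b, a] ++ B (1 + 2 * i) ++ [c] ++ B (5 - i)

/-! In `b^p a b^q c b a b^r c b^s` the counts of `b`, `ab`, `bc` and `abc` are affine functions of
`(p, q, r, s)`, and the common kernel of their linear parts is spanned by `(1, -2, 2, -1)`: this is
the direction in which the family moves. As `i` grows, the first `a` and the last `c` move right
while the factor `cba` moves left. The outer letters of two such words give four mismatches. The
letters `c` and `a` of the two copies of `cba` occupy at least three further positions, and at most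
one of these is shared, namely when the `c` of one copy lies over the `a` of the other, which is
still a mismatch.
-/

section ScatteredSubwords

variable {α : Type*} [DecidableEq α]

theorem scount_eq_zero {w v : List α} (h : ¬ v <+ w) : scount w v = 0 :=
  count_eq_zero_of_not_mem fun hv => h (mem_sublists.1 hv)

@[simp]
theorem scount_nil_right (w : List α) : scount w [] = 1 := by
  rw [scount, (sublists_perm_sublists' w).count_eq]
  induction w with
  | nil => rfl
  | cons x w ih =>
    have not_mem : [] ∉ (sublists' w).map (cons x) := by simp
    rw [sublists'_cons, count_append, ih, count_eq_zero_of_not_mem not_mem]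

@[simp]
theorem scount_nil_cons (y : α) (v : List α) : scount [] (y :: v) = 0 :=
  scount_eq_zero (by simp)

theorem scount_cons_cons (x y : α) (w v : List α) :
    scount (x :: w) (y :: v) = scount w (y :: v) + if x = y then scount w v else 0 := by
  simp only [scount, (sublists_perm_sublists' _).count_eq, sublists'_cons, count_append]
  congr 1
  split_ifs with h
  · rw [h, count_map_of_injective _ _ cons_injective]
  · refine count_eq_zero_of_not_mem fun hv => ?_
    obtain ⟨u, -, hu⟩ := mem_map.1 hv
    exact h (cons.inj hu).1

theorem scount_singleton (w : List α) (x : α) : scount w [x] = w.count x := by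
  induction w with
  | nil => simp
  | cons y w ih => simp [scount_cons_cons, count_cons, ih]

theorem scount_append (u w v : List α) :
    scount (u ++ w) v =
      ∑ k ∈ Finset.range (v.length + 1), scount u (v.take k) * scount w (v.drop k) := by
  induction u generalizing v with
  | nil =>
    cases v with
    | nil => simp
    | cons y v => simp [Finset.sum_range_succ' _ (v.length + 1)]
  | cons x u ih =>
    cases v with
    | nil => simp
    | cons y v =>
      rw [cons_append, scount_cons_cons, ih, ih, length_cons,
        Finset.sum_range_succ', Finset.sum_range_succ' _ (v.length + 1)]
      split_ifs with h
      · simp [scount_cons_cons, h, add_mul, Finset.sum_add_distrib, add_right_comm]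
      · simp [scount_cons_cons, h]

theorem scount_replicate_eq_zero {v : List α} {x y : α} (hy : y ∈ v) (hne : y ≠ x) (n : ℕ) :
    scount (replicate n x) v = 0 :=
  scount_eq_zero fun h => hne (eq_of_mem_replicate (h.subset hy))

end ScatteredSubwords

section HammingDistance

variable {α : Type*} [DecidableEq α]

theorem dH_comm (w w' : List α) : dH w w' = dH w' w := by
  rw [dH, dH, ← zip_swap, countP_map]
  simp only [Function.comp_def, Prod.fst_swap, Prod.snd_swap, ne_comm]

theorem dH_eq_card_filter_range {w w' : List α} (hlen : w.length = w'.length) :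
    dH w w' = ((Finset.range w.length).filter fun k => w[k]? ≠ w'[k]?).card := by
  rw [Finset.card_filter]
  induction w generalizing w' with
  | nil => simp [dH]
  | cons x w ih =>
    obtain ⟨y, w', rfl⟩ := exists_cons_of_length_eq_add_one hlen.symm
    have dH_tail := ih (Nat.succ.inj hlen)
    simpa [dH, countP_cons, Finset.sum_range_succ'] using dH_tail

theorem length_le_dH {w w' : List α} (hlen : w.length = w'.length) {l : List ℕ} (hl : l.Nodup)
    (hne : ∀ k ∈ l, w[k]? ≠ w'[k]?) : l.length ≤ dH w w' := by
  rw [dH_eq_card_filter_range hlen, ← toFinset_card_of_nodup hl]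
  refine Finset.card_le_card fun k hk => ?_
  have hk_ne := hne k (mem_toFinset.1 hk)
  refine Finset.mem_filter.2 ⟨Finset.mem_range.2 (lt_of_not_ge fun hk_ge => hk_ne ?_), hk_ne⟩
  rw [getElem?_eq_none hk_ge, getElem?_eq_none (hlen ▸ hk_ge)]

end HammingDistance

/-- The word `b^p a b^q c b a b^r c b^s`, the common shape of the words `fam i`. -/
def blockWord (p q r s : ℕ) : List ABC :=
  B p ++ [a] ++ B q ++ [c, b, a] ++ B r ++ [c] ++ B s

section BlockWord

variable {p q r s p' q' r' s' : ℕ}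

theorem length_blockWord (p q r s : ℕ) : (blockWord p q r s).length = p + q + r + s + 5 := by
  simp only [blockWord, length_append, length_replicate, length_cons, length_nil]
  omega

theorem getElem?_blockWord (p q r s k : ℕ) :
    (blockWord p q r s)[k]? =
      if k = p ∨ k = p + q + 3 then some a
      else if k = p + q + 1 ∨ k = p + q + r + 4 then some c
      else if k < p + q + r + s + 5 then some b
      else none := by
  simp only [blockWord, getElem?_append, getElem?_replicate, getElem?_cons, getElem?_nil,
    length_append, length_replicate, length_cons, length_nil]
  split_ifs <;> first | rfl | omega

theorem scount_blockWord_a (p q r s : ℕ) : scount (blockWord p q r s) [a] = 2 := by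
  simp [scount_singleton, blockWord, count_replicate]

theorem scount_blockWord_b (p q r s : ℕ) :
    scount (blockWord p q r s) [b] = p + q + r + s + 1 := by
  simp +arith [scount_singleton, blockWord]

theorem scount_blockWord_c (p q r s : ℕ) : scount (blockWord p q r s) [c] = 2 := by
  simp [scount_singleton, blockWord, count_replicate]

theorem scount_blockWord_ab (p q r s : ℕ) :
    scount (blockWord p q r s) [a, b] = q + 2 * (r + s) + 1 := by
  simp +arith [blockWord, scount_append, Finset.sum_range_succ, scount_singleton, scount_cons_cons,
    scount_replicate_eq_zero (y := a)]

theorem scount_blockWord_bc (p q r s : ℕ) :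
    scount (blockWord p q r s) [b, c] = 2 * (p + q) + r + 1 := by
  simp +arith [blockWord, scount_append, Finset.sum_range_succ, scount_singleton, scount_cons_cons,
    count_replicate, scount_replicate_eq_zero (y := c)]

theorem scount_blockWord_abc (p q r s : ℕ) :
    scount (blockWord p q r s) [a, b, c] = 2 * (q + r) + 1 := by
  simp +arith [blockWord, scount_append, Finset.sum_range_succ, scount_singleton, scount_cons_cons,
    count_replicate, scount_replicate_eq_zero (y := a), scount_replicate_eq_zero (y := c)]

theorem mEq3_blockWord_iff :
    MEq3 (blockWord p q r s) (blockWord p' q' r' s') ↔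
      q + 2 * p = q' + 2 * p' ∧ r + 2 * p' = r' + 2 * p ∧ s + p = s' + p' := by
  simp only [MEq3, scount_blockWord_a, scount_blockWord_b, scount_blockWord_c,
    scount_blockWord_ab, scount_blockWord_bc, scount_blockWord_abc]
  grind

theorem seven_le_dH_blockWord (first_a : p < p') (first_c : p' + q' < p + q)
    (last_c : p + q + r < p' + q' + r') (hlen : p + q + r + s = p' + q' + r' + s') :
    7 ≤ dH (blockWord p q r s) (blockWord p' q' r' s') := by
  -- The two words read `a/b`, `b/a`, `b/c`, `c/a` or `c/b`, `a/b`, `c/b`, `b/c` there.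
  let mismatches : List ℕ :=
    [p, p', p' + q' + 1, p + q + 1, p + q + 3, p + q + r + 4, p' + q' + r' + 4]
  have increasing : mismatches.IsChain (· < ·) := by
    simp only [mismatches, isChain_cons_cons, isChain_singleton, and_true]
    omega
  refine length_le_dH (by simp only [length_blockWord, hlen])
    increasing.pairwise.nodup fun k hk => ?_
  simp only [getElem?_blockWord]
  grind

end BlockWord

/-- The word `b^(p+i) a b^(q-2i) c b a b^(r+2i) c b^(s-i)`, obtained from `blockWord p q r s` by `i`
steps in the direction `(1, -2, 2, -1)`. The subtractions truncate unless `2 * i ≤ q` and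
`i ≤ s`. -/
def slideWord (p q r s i : ℕ) : List ABC :=
  blockWord (p + i) (q - 2 * i) (r + 2 * i) (s - i)

theorem stmt_18_general (p q r s : ℕ) :
    (∀ i : ℕ, 2 * i ≤ q → i ≤ s → MEq3 (blockWord p q r s) (slideWord p q r s i)) ∧
    (∀ i j : ℕ, 2 * i ≤ q → i ≤ s → 2 * j ≤ q → j ≤ s → i ≠ j →
      7 ≤ dH (slideWord p q r s i) (slideWord p q r s j)) := by
  refine ⟨fun i hiq his => mEq3_blockWord_iff.2 (by omega), fun i j hiq his hjq hjs hij => ?_⟩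
  wlog hlt : i < j generalizing i j
  · rw [dH_comm]
    exact this j i hjq hjs hiq his hij.symm (by omega)
  · apply seven_le_dH_blockWord <;> omega

theorem fam_eq_slideWord (i : ℕ) : fam i = slideWord 0 11 1 5 i := by
  rw [slideWord, zero_add, fam, blockWord]

theorem stmt_18 :
    (∀ i : ℕ, i ≤ 5 →
      MEq3 ([a] ++ B 11 ++ [c, b, a, b, c] ++ B 5) (fam i)) ∧
    (∀ i j : ℕ, i ≤ 5 → j ≤ 5 → i ≠ j → 7 ≤ dH (fam i) (fam j)) := by
  obtain ⟨mEq3_slide, seven_le_dH⟩ := stmt_18_general 0 11 1 5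
  simp only [fam_eq_slideWord]
  exact ⟨fun i hi => mEq3_slide i (by omega) hi,
    fun i j hi hj => seven_le_dH i j (by omega) hi (by omega) hj⟩
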